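/- Let A ∈ ℝ^{m×n}, y ∈ ℝ^m, let x* ∈ ℝⁿ be k-sparse and set η = y − Ax*. Let δ₁ and δ₂ be restricted isometry constants of orders k and 2k for A with δ₂ < 1. Let u ∈ ℝⁿ be k-sparse and let z* minimize ‖y − Az‖₂² over all z ∈ ℝⁿ with supp(z) ⊆ supp(u). Then ‖z* − x*‖₂ ≤ (1/√(1−δ₂²))·‖x* − u‖₂ + (√(1+δ₁)/(1−δ₂))·‖η‖₂. -/

import Mathlib

/-! Write `S = supp u`, `e = z* - x*`, and split `e = w + v` with `w` the part of `e` on `S`.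
Minimality of `z*` makes the residual `η - A e` orthogonal to `A w` (`dot_eq_zero_of_min`), and the
restricted isometry property, polarized, gives `⟨w, e⟩ - ⟨A w, A e⟩ ≤ δ₂ ‖w‖ ‖e‖` (`RIC.dot_sub_le`).
Hence `‖w‖² = ⟨w, e⟩ ≤ δ₂ ‖w‖ ‖e‖ + ‖A w‖ ‖η‖`, so that `‖w‖ ≤ δ₂ ‖e‖ + √(1 + δ₁) ‖η‖`.
Off `S` both `z*` and `u` vanish, so `‖v‖ ≤ ‖x* - u‖`. Substituting in `‖e‖² = ‖w‖² + ‖v‖²` leaves a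
quadratic inequality in `‖e‖`, whose solution is the claim (`le_of_quadratic`). -/



open Matrix Finset Filter

/-- Euclidean (ℓ₂) norm of a vector. -/
noncomputable def nrm {n : ℕ} (x : Fin n → ℝ) : ℝ := Real.sqrt (∑ i, x i ^ 2)

/-- A vector is `s`-sparse if it has at most `s` nonzero entries. -/
def sparse {n : ℕ} (s : ℕ) (x : Fin n → ℝ) : Prop :=
  ((Finset.univ : Finset (Fin n)).filter fun i => x i ≠ 0).card ≤ s

/-- Support of a vector, as a finset. -/
noncomputable def suppF {n : ℕ} (x : Fin n → ℝ) : Finset (Fin n) :=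
  (Finset.univ : Finset (Fin n)).filter fun i => x i ≠ 0

/-- Restriction of a vector to an index set (zero outside). -/
def restr {n : ℕ} (x : Fin n → ℝ) (Ω : Finset (Fin n)) : Fin n → ℝ :=
  fun i => if i ∈ Ω then x i else 0

/-- `δ ∈ [0,1)` is a restricted isometry constant of order `s` for `A`. -/
def RIC {m n : ℕ} (A : Matrix (Fin m) (Fin n) ℝ) (s : ℕ) (δ : ℝ) : Prop :=
  0 ≤ δ ∧ δ < 1 ∧ ∀ x : Fin n → ℝ, sparse s x →
    (1 - δ) * nrm x ^ 2 ≤ nrm (A.mulVec x) ^ 2 ∧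
      nrm (A.mulVec x) ^ 2 ≤ (1 + δ) * nrm x ^ 2

/-- `h` is a hard thresholding of `z` at level `q` with support `Ω`. -/
def IsHT {n : ℕ} (q : ℕ) (z h : Fin n → ℝ) (Ω : Finset (Fin n)) : Prop :=
  Ω.card = q ∧ (∀ i ∈ Ω, h i = z i) ∧ (∀ i ∉ Ω, h i = 0) ∧
    ∀ i ∈ Ω, ∀ j ∉ Ω, |z j| ≤ |z i|

theorem nrm_nonneg' {n : ℕ} (x : Fin n → ℝ) : 0 ≤ nrm x := Real.sqrt_nonneg _

theorem nrm_sq {n : ℕ} (x : Fin n → ℝ) : nrm x ^ 2 = x ⬝ᵥ x := by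
  unfold nrm
  rw [Real.sq_sqrt (Finset.sum_nonneg fun i _ => sq_nonneg _)]
  simp [dotProduct, sq]

theorem dot_le_nrm {n : ℕ} (x y : Fin n → ℝ) : x ⬝ᵥ y ≤ nrm x * nrm y := by
  unfold nrm
  exact Real.sum_mul_le_sqrt_mul_sqrt _ _ _

theorem nrm_add_smul_sq {n : ℕ} (a b : Fin n → ℝ) (t : ℝ) :
    nrm (a + t • b) ^ 2 = nrm a ^ 2 + 2 * t * (a ⬝ᵥ b) + t ^ 2 * nrm b ^ 2 := by
  simp only [nrm_sq, add_dotProduct, dotProduct_add, smul_dotProduct, dotProduct_smul, smul_eq_mul]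
  rw [dotProduct_comm b a]
  ring

theorem sparse_of_support {n s : ℕ} {x : Fin n → ℝ} (T : Finset (Fin n)) (hT : T.card ≤ s)
    (h : ∀ i ∉ T, x i = 0) : sparse s x := by
  refine (Finset.card_le_card fun i hi => ?_).trans hT
  by_contra hc
  exact (Finset.mem_filter.1 hi).2 (h i hc)

/-- Polarized restricted isometry property: on vectors with a common support of size at most `s`,
`A` preserves inner products up to `δ ‖a‖ ‖b‖`. -/
theorem RIC.dot_sub_le {m n s : ℕ} {A : Matrix (Fin m) (Fin n) ℝ} {δ : ℝ} (h : RIC A s δ)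
    (T : Finset (Fin n)) (hT : T.card ≤ s) {a b : Fin n → ℝ}
    (ha : ∀ i ∉ T, a i = 0) (hb : ∀ i ∉ T, b i = 0) :
    a ⬝ᵥ b - A.mulVec a ⬝ᵥ A.mulVec b ≤ δ * nrm a * nrm b := by
  obtain ⟨h0, -, h⟩ := h
  have hs (t : ℝ) : sparse s (a + t • b) :=
    sparse_of_support T hT fun i hi => by simp [ha i hi, hb i hi]
  have key (t : ℝ) : 0 ≤ (δ * nrm b ^ 2) * (t * t)
      + (-2 * (a ⬝ᵥ b - A.mulVec a ⬝ᵥ A.mulVec b)) * t + δ * nrm a ^ 2 := by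
    have h1 := (h _ (hs t)).1
    have h2 := (h _ (hs (-t))).2
    simp only [mulVec_add, mulVec_smul, nrm_add_smul_sq] at h1 h2
    linarith
  have hd := discrim_le_zero key
  unfold discrim at hd
  refine abs_le_of_sq_le_sq' (b := δ * nrm a * nrm b) ?_ ?_ |>.2
  · linarith
  · have := nrm_nonneg' a
    have := nrm_nonneg' b
    positivity

/-- First-order optimality condition along the direction `b`. -/
theorem dot_eq_zero_of_min {m : ℕ} {r b : Fin m → ℝ}
    (h : ∀ t : ℝ, nrm r ^ 2 ≤ nrm (r + t • b) ^ 2) : r ⬝ᵥ b = 0 := by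
  have key (t : ℝ) : 0 ≤ nrm b ^ 2 * (t * t) + (2 * (r ⬝ᵥ b)) * t + 0 := by
    have := h t
    rw [nrm_add_smul_sq] at this
    linarith
  have hd := discrim_le_zero key
  unfold discrim at hd
  nlinarith

theorem le_of_quadratic {E V c δ : ℝ} (hV : 0 ≤ V) (hc : 0 ≤ c) (h0 : 0 ≤ δ)
    (h1 : δ < 1) (h : E ^ 2 ≤ (δ * E + c) ^ 2 + V ^ 2) :
    E ≤ V / Real.sqrt (1 - δ ^ 2) + c / (1 - δ) := by
  have hp : 0 < 1 - δ ^ 2 := by nlinarith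
  have h1' : 0 < 1 - δ := by linarith
  have h2' : 0 < 1 + δ := by linarith
  -- The quadratic `(1 - δ²) E² - 2 δ c E - c²` has roots `c / (1 - δ)` and `-c / (1 + δ)`.
  have hf : (1 - δ ^ 2) * ((E - c / (1 - δ)) * (E + c / (1 + δ))) ≤ V ^ 2 := by
    have : (1 - δ ^ 2) * ((E - c / (1 - δ)) * (E + c / (1 + δ))) = E ^ 2 - (δ * E + c) ^ 2 := by
      field_simp
      ring
    linarith
  rw [← sub_le_iff_le_add, le_div_iff₀ (Real.sqrt_pos.2 hp)]
  have hq : 0 ≤ c / (1 - δ) := by positivity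
  have hr : 0 ≤ c / (1 + δ) := by positivity
  rcases le_total (E - c / (1 - δ)) 0 with hF | hF
  · exact (mul_nonpos_of_nonpos_of_nonneg hF (Real.sqrt_nonneg _)).trans hV
  · refine (sq_le_sq₀ (mul_nonneg hF (Real.sqrt_nonneg _)) hV).1 ?_
    rw [mul_pow, Real.sq_sqrt hp.le, mul_comm]
    refine le_trans ?_ hf
    refine mul_le_mul_of_nonneg_left ?_ hp.le
    rw [sq]
    exact mul_le_mul_of_nonneg_left (by linarith) hF

theorem stmt11 {m n : ℕ} (k : ℕ) (A : Matrix (Fin m) (Fin n) ℝ) (y : Fin m → ℝ)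
    (xs : Fin n → ℝ) (hxs : sparse k xs) (η : Fin m → ℝ) (hη : η = y - A.mulVec xs)
    (δ₁ δ₂ : ℝ) (h1 : RIC A k δ₁) (h2 : RIC A (2 * k) δ₂)
    (u : Fin n → ℝ) (hu : sparse k u)
    (zs : Fin n → ℝ) (hzs : suppF zs ⊆ suppF u)
    (hmin : ∀ z : Fin n → ℝ, suppF z ⊆ suppF u →
      nrm (y - A.mulVec zs) ^ 2 ≤ nrm (y - A.mulVec z) ^ 2) :
    nrm (zs - xs) ≤ 1 / Real.sqrt (1 - δ₂ ^ 2) * nrm (xs - u) +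
      Real.sqrt (1 + δ₁) / (1 - δ₂) * nrm η := by
  obtain ⟨h20, h21, -⟩ := id h2
  have hzero {x : Fin n → ℝ} {i : Fin n} (hi : i ∉ suppF x) : x i = 0 := by
    simpa [suppF] using hi
  have hz0 {i : Fin n} (hi : i ∉ suppF u) : zs i = 0 := hzero fun hc => hi (hzs hc)
  set e := zs - xs with he
  set w := restr e (suppF u) with hw
  have hw0 (i : Fin n) (hi : i ∉ suppF u) : w i = 0 := by simp [hw, restr, hi]
  have hwe : w ⬝ᵥ e = nrm w ^ 2 := by
    rw [nrm_sq]
    refine Finset.sum_congr rfl fun i _ => ?_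
    by_cases hi : i ∈ suppF u <;> simp [hw, restr, hi]
  have hsplit : nrm e ^ 2 ≤ nrm w ^ 2 + nrm (xs - u) ^ 2 := by
    simp only [nrm_sq, dotProduct, ← Finset.sum_add_distrib]
    refine Finset.sum_le_sum fun i _ => ?_
    by_cases hi : i ∈ suppF u
    · simpa [hw, restr, hi] using mul_self_nonneg (xs i - u i)
    · simp [hw, restr, hi, he, hz0 hi, hzero hi]
  have hcard : (suppF u ∪ suppF xs).card ≤ 2 * k := by
    have hu' : (suppF u).card ≤ k := hu
    have hx' : (suppF xs).card ≤ k := hxs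
    have := Finset.card_union_le (suppF u) (suppF xs)
    omega
  have hdot := h2.dot_sub_le _ hcard (a := w) (b := e)
    (fun i hi => hw0 i fun hc => hi (Finset.mem_union_left _ hc))
    (fun i hi => by
      rw [Finset.mem_union, not_or] at hi
      simp [he, hz0 hi.1, hzero hi.2])
  have horth : (y - A.mulVec zs) ⬝ᵥ A.mulVec w = 0 := by
    refine dot_eq_zero_of_min fun t => ?_
    have := hmin (zs + (-t) • w) fun i hi => by
      by_contra hc
      exact (Finset.mem_filter.1 hi).2 (by simp [hz0 hc, hw0 i hc])
    convert this using 3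
    rw [mulVec_add, mulVec_smul, neg_smul]
    abel
  have hres : y - A.mulVec zs = η - A.mulVec e := by
    rw [hη, he, mulVec_sub]
    abel
  rw [hres, sub_dotProduct, dotProduct_comm, dotProduct_comm (A.mulVec e)] at horth
  have hAw : nrm (A.mulVec w) ≤ Real.sqrt (1 + δ₁) * nrm w := by
    have h10 := h1.1
    refine (sq_le_sq₀ (nrm_nonneg' _)
      (mul_nonneg (Real.sqrt_nonneg _) (nrm_nonneg' _))).1 ?_
    rw [mul_pow, Real.sq_sqrt (by linarith)]
    exact (h1.2.2 w (sparse_of_support _ hu hw0)).2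
  have hc : 0 ≤ Real.sqrt (1 + δ₁) * nrm η := mul_nonneg (Real.sqrt_nonneg _) (nrm_nonneg' _)
  have hwle : nrm w ≤ δ₂ * nrm e + Real.sqrt (1 + δ₁) * nrm η := by
    rcases (nrm_nonneg' w).eq_or_lt with hw' | hw'
    · rw [← hw']
      exact add_nonneg (mul_nonneg h20 (nrm_nonneg' _)) hc
    · refine le_of_mul_le_mul_left ?_ hw'
      have hcs := (dot_le_nrm (A.mulVec w) η).trans
        (mul_le_mul_of_nonneg_right hAw (nrm_nonneg' η))
      linarith
  have hquad : nrm e ^ 2 ≤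
      (δ₂ * nrm e + Real.sqrt (1 + δ₁) * nrm η) ^ 2 + nrm (xs - u) ^ 2 := by
    have := pow_le_pow_left₀ (nrm_nonneg' w) hwle 2
    linarith
  refine (le_of_quadratic (nrm_nonneg' _) hc h20 h21 hquad).trans (le_of_eq ?_)
  ring
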